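/- Assume a = 2, b ≥ 3 and t ≥ p = 2b. Let x* = (b − 1 − √((b−1)² − 1))/2 and y* = 2b − 1 + (4/b − 6)x* + (η − 9 + 10/b)x*². Then: (i) q_s(x*) ≤ y* for every block array s, with equality if and only if s ∈ Q₀ ∪ Q₁* ∪ Q₂*; and (ii) for every real x ≠ x*, max_{s∈S} q_s(x) > y*. -/

import Mathlib

open Matrix

namespace TwoDim

/-- The set of plots of an `a × b` block. -/
abbrev Plot (a b : ℕ) := Fin a × Fin b

/-- A block array: an assignment of one of `t` treatments to each plot. -/
abbrev BlockArray (a b t : ℕ) := Plot a b → Fin t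

/-- The all-ones matrix. -/
def Jmat (n : Type*) : Matrix n n ℝ := Matrix.of fun _ _ => 1

/-- `B_m = I - J/m`. -/
noncomputable def Bmat (n : Type*) [Fintype n] [DecidableEq n] : Matrix n n ℝ :=
  1 - ((Fintype.card n : ℝ))⁻¹ • Jmat n

variable {a b t : ℕ}

/-- The treatment incidence matrix `T_s`. -/
def Tmat (s : BlockArray a b t) : Matrix (Plot a b) (Fin t) ℝ :=
  Matrix.of fun q k => if s q = k then 1 else 0

/-- Two plots are neighbors if they agree in one coordinate and differ by 1 in the other. -/
def Neighbor (q r : Plot a b) : Prop :=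
  (q.1 = r.1 ∧ (q.2.val + 1 = r.2.val ∨ r.2.val + 1 = q.2.val)) ∨
  (q.2 = r.2 ∧ (q.1.val + 1 = r.1.val ∨ r.1.val + 1 = q.1.val))

instance (q r : Plot a b) : Decidable (Neighbor q r) := by
  unfold Neighbor; infer_instance

/-- The adjacency matrix of the neighbor relation. -/
def Mmat (a b : ℕ) : Matrix (Plot a b) (Plot a b) ℝ :=
  Matrix.of fun q r => if Neighbor q r then 1 else 0

/-- `F_s = M T_s`. -/
def Fmat (s : BlockArray a b t) : Matrix (Plot a b) (Fin t) ℝ :=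
  Mmat a b * Tmat s

/-- `B̃ = Σ⁻¹ − Σ⁻¹ J Σ⁻¹ / (1'Σ⁻¹1)`. -/
noncomputable def Btilde (Sig : Matrix (Plot a b) (Plot a b) ℝ) :
    Matrix (Plot a b) (Plot a b) ℝ :=
  Sig⁻¹ - (∑ i, ∑ j, Sig⁻¹ i j)⁻¹ • (Sig⁻¹ * Jmat (Plot a b) * Sig⁻¹)

/-- `C_{s00} = T_s' W T_s` (with `W` playing the role of `B̃`). -/
def Cs00 (W : Matrix (Plot a b) (Plot a b) ℝ) (s : BlockArray a b t) :
    Matrix (Fin t) (Fin t) ℝ := (Tmat s)ᵀ * W * Tmat s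

/-- `C_{s01} = T_s' W F_s`. -/
def Cs01 (W : Matrix (Plot a b) (Plot a b) ℝ) (s : BlockArray a b t) :
    Matrix (Fin t) (Fin t) ℝ := (Tmat s)ᵀ * W * Fmat s

/-- `C_{s11} = F_s' W F_s`. -/
def Cs11 (W : Matrix (Plot a b) (Plot a b) ℝ) (s : BlockArray a b t) :
    Matrix (Fin t) (Fin t) ℝ := (Fmat s)ᵀ * W * Fmat s

/-- `c_{s00} = tr(B_t C_{s00})`. -/
noncomputable def cs00 (W : Matrix (Plot a b) (Plot a b) ℝ) (s : BlockArray a b t) : ℝ :=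
  Matrix.trace (Bmat (Fin t) * Cs00 W s)

noncomputable def cs01 (W : Matrix (Plot a b) (Plot a b) ℝ) (s : BlockArray a b t) : ℝ :=
  Matrix.trace (Bmat (Fin t) * Cs01 W s)

noncomputable def cs11 (W : Matrix (Plot a b) (Plot a b) ℝ) (s : BlockArray a b t) : ℝ :=
  Matrix.trace (Bmat (Fin t) * Cs11 W s)

/-- The quadratic `q_s(x) = c_{s00} + 2 c_{s01} x + c_{s11} x²`. -/
noncomputable def qpoly (W : Matrix (Plot a b) (Plot a b) ℝ) (s : BlockArray a b t) (x : ℝ) : ℝ :=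
  cs00 W s + 2 * cs01 W s * x + cs11 W s * x ^ 2

/-- A measure on the set of block arrays: nonnegative weights summing to one. -/
def IsMeasure (ξ : BlockArray a b t → ℝ) : Prop :=
  (∀ s, 0 ≤ ξ s) ∧ ∑ s, ξ s = 1

noncomputable def Cm00 (W : Matrix (Plot a b) (Plot a b) ℝ) (ξ : BlockArray a b t → ℝ) :
    Matrix (Fin t) (Fin t) ℝ := ∑ s, ξ s • Cs00 W s

noncomputable def Cm01 (W : Matrix (Plot a b) (Plot a b) ℝ) (ξ : BlockArray a b t → ℝ) :
    Matrix (Fin t) (Fin t) ℝ := ∑ s, ξ s • Cs01 W s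

noncomputable def Cm11 (W : Matrix (Plot a b) (Plot a b) ℝ) (ξ : BlockArray a b t → ℝ) :
    Matrix (Fin t) (Fin t) ℝ := ∑ s, ξ s • Cs11 W s

noncomputable def cm00 (W : Matrix (Plot a b) (Plot a b) ℝ) (ξ : BlockArray a b t → ℝ) : ℝ :=
  ∑ s, ξ s * cs00 W s

noncomputable def cm01 (W : Matrix (Plot a b) (Plot a b) ℝ) (ξ : BlockArray a b t → ℝ) : ℝ :=
  ∑ s, ξ s * cs01 W s

noncomputable def cm11 (W : Matrix (Plot a b) (Plot a b) ℝ) (ξ : BlockArray a b t → ℝ) : ℝ :=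
  ∑ s, ξ s * cs11 W s

/-- `q*_ξ = c_{ξ00} − c_{ξ01}²/c_{ξ11}`. -/
noncomputable def qstar (W : Matrix (Plot a b) (Plot a b) ℝ) (ξ : BlockArray a b t → ℝ) : ℝ :=
  cm00 W ξ - (cm01 W ξ) ^ 2 / cm11 W ξ

/-- `G` is a generalized inverse of `A`. -/
def IsGenInv (A G : Matrix (Fin t) (Fin t) ℝ) : Prop := A * G * A = A

/-- Information matrix `C_{ξ00} − C_{ξ01} G C_{ξ10}` computed with a generalized inverse `G`. -/
noncomputable def InfoMat (W : Matrix (Plot a b) (Plot a b) ℝ) (ξ : BlockArray a b t → ℝ)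
    (G : Matrix (Fin t) (Fin t) ℝ) : Matrix (Fin t) (Fin t) ℝ :=
  Cm00 W ξ - Cm01 W ξ * G * (Cm01 W ξ)ᵀ

/-- A criterion `Φ` on `t×t` real symmetric matrices: concave, Loewner-nondecreasing, and
invariant under simultaneous permutations of rows and columns. -/
def GoodPhi (t : ℕ) (Φ : Matrix (Fin t) (Fin t) ℝ → ℝ) : Prop :=
  (∀ A B : Matrix (Fin t) (Fin t) ℝ, A.IsSymm → B.IsSymm → ∀ α : ℝ, 0 ≤ α → α ≤ 1 →
      α * Φ A + (1 - α) * Φ B ≤ Φ (α • A + (1 - α) • B)) ∧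
  (∀ A B : Matrix (Fin t) (Fin t) ℝ, A.IsSymm → B.IsSymm → (B - A).PosSemidef → Φ A ≤ Φ B) ∧
  (∀ (σ : Equiv.Perm (Fin t)) (C : Matrix (Fin t) (Fin t) ℝ), Φ (C.submatrix σ σ) = Φ C)

/-- Universal optimality of a measure `ξ`. -/
def UnivOptimal (W : Matrix (Plot a b) (Plot a b) ℝ) (ξ : BlockArray a b t → ℝ) : Prop :=
  ∀ η : BlockArray a b t → ℝ, IsMeasure η →
    ∀ G H : Matrix (Fin t) (Fin t) ℝ, IsGenInv (Cm11 W ξ) G → IsGenInv (Cm11 W η) H →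
      ∀ Φ : Matrix (Fin t) (Fin t) ℝ → ℝ, GoodPhi t Φ →
        Φ (InfoMat W η H) ≤ Φ (InfoMat W ξ G)

/-- A measure is symmetric if it is invariant under relabeling of the treatments. -/
def IsSymmetricMeasure (ξ : BlockArray a b t → ℝ) : Prop :=
  ∀ (σ : Equiv.Perm (Fin t)) (s : BlockArray a b t), ξ (fun q => σ (s q)) = ξ s

/-- A matrix is completely symmetric if it is of the form `αI + βJ`. -/
def ComplSym (A : Matrix (Fin t) (Fin t) ℝ) : Prop :=
  ∃ α β : ℝ, A = α • (1 : Matrix (Fin t) (Fin t) ℝ) + β • Jmat (Fin t)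

/-- A measure is pseudo symmetric if `C_{ξ00}`, `C_{ξ01}`, `C_{ξ11}` are completely symmetric. -/
def PseudoSym (W : Matrix (Plot a b) (Plot a b) ℝ) (ξ : BlockArray a b t → ℝ) : Prop :=
  ComplSym (Cm00 W ξ) ∧ ComplSym (Cm01 W ξ) ∧ ComplSym (Cm11 W ξ)

/-- `r(x) = max_{s∈S} q_s(x)`. -/
noncomputable def rfun {a b : ℕ} (t : ℕ) (W : Matrix (Plot a b) (Plot a b) ℝ) (x : ℝ) : ℝ :=
  sSup (Set.range fun s : BlockArray a b t => qpoly W s x)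

/-- `min_{s∈S} q_s(x)`. -/
noncomputable def rmin {a b : ℕ} (t : ℕ) (W : Matrix (Plot a b) (Plot a b) ℝ) (x : ℝ) : ℝ :=
  sInf (Set.range fun s : BlockArray a b t => qpoly W s x)

/-- Number of plots assigned treatment `k` by `s`. -/
noncomputable def f0 (s : BlockArray a b t) (k : Fin t) : ℕ :=
  {q : Plot a b | s q = k}.ncard

/-- Replications of `k` among the columns `1,…,b−1`. -/
noncomputable def f1 (s : BlockArray a b t) (k : Fin t) : ℕ :=
  {q : Plot a b | s q = k ∧ q.2.val + 1 < b}.ncard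

/-- Replications of `k` among the columns `2,…,b`. -/
noncomputable def f2 (s : BlockArray a b t) (k : Fin t) : ℕ :=
  {q : Plot a b | s q = k ∧ 1 ≤ q.2.val}.ncard

/-- Replications of `k` among the rows `1,…,a−1`. -/
noncomputable def f3 (s : BlockArray a b t) (k : Fin t) : ℕ :=
  {q : Plot a b | s q = k ∧ q.1.val + 1 < a}.ncard

/-- Replications of `k` among the rows `2,…,a`. -/
noncomputable def f4 (s : BlockArray a b t) (k : Fin t) : ℕ :=
  {q : Plot a b | s q = k ∧ 1 ≤ q.1.val}.ncard

noncomputable def fc (s : BlockArray a b t) : ℕ → Fin t → ℕ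
  | 0 => f0 s
  | 1 => f1 s
  | 2 => f2 s
  | 3 => f3 s
  | 4 => f4 s
  | _ => fun _ => 0

/-- `h^{uv}_s = Σ_k f^u_{s,k} f^v_{s,k}`. -/
noncomputable def hval (s : BlockArray a b t) (u v : ℕ) : ℝ :=
  ∑ k : Fin t, (fc s u k : ℝ) * (fc s v k : ℝ)

noncomputable def h00 (s : BlockArray a b t) : ℝ := hval s 0 0

noncomputable def h1 (s : BlockArray a b t) : ℝ :=
  hval s 0 1 + hval s 0 2 + hval s 0 3 + hval s 0 4

noncomputable def h2 (s : BlockArray a b t) : ℝ :=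
  hval s 1 1 + hval s 2 2 + hval s 3 3 + hval s 4 4

noncomputable def h3 (s : BlockArray a b t) : ℝ :=
  hval s 1 2 + hval s 1 3 + hval s 1 4 + hval s 2 3 + hval s 2 4 + hval s 3 4

/-- `z¹_{s,r}`: horizontally adjacent pairs of plots receiving the same treatment. -/
noncomputable def zr1 (s : BlockArray a b t) : ℕ :=
  {qr : Plot a b × Plot a b |
    qr.1.1 = qr.2.1 ∧ qr.1.2.val + 1 = qr.2.2.val ∧ s qr.1 = s qr.2}.ncard

noncomputable def zr2 (s : BlockArray a b t) : ℕ :=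
  {qr : Plot a b × Plot a b |
    qr.1.1 = qr.2.1 ∧ qr.1.2.val + 2 = qr.2.2.val ∧ s qr.1 = s qr.2}.ncard

noncomputable def zc1 (s : BlockArray a b t) : ℕ :=
  {qr : Plot a b × Plot a b |
    qr.1.2 = qr.2.2 ∧ qr.1.1.val + 1 = qr.2.1.val ∧ s qr.1 = s qr.2}.ncard

noncomputable def zc2 (s : BlockArray a b t) : ℕ :=
  {qr : Plot a b × Plot a b |
    qr.1.2 = qr.2.2 ∧ qr.1.1.val + 2 = qr.2.1.val ∧ s qr.1 = s qr.2}.ncard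

/-- pairs `(i,j)`, `(i−1,j+1)` with the same treatment. -/
noncomputable def zd1 (s : BlockArray a b t) : ℕ :=
  {qr : Plot a b × Plot a b |
    qr.2.1.val + 1 = qr.1.1.val ∧ qr.1.2.val + 1 = qr.2.2.val ∧ s qr.1 = s qr.2}.ncard

/-- pairs `(i,j)`, `(i+1,j+1)` with the same treatment. -/
noncomputable def zd2 (s : BlockArray a b t) : ℕ :=
  {qr : Plot a b × Plot a b |
    qr.1.1.val + 1 = qr.2.1.val ∧ qr.1.2.val + 1 = qr.2.2.val ∧ s qr.1 = s qr.2}.ncard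

noncomputable def z1 (s : BlockArray a b t) : ℝ := 2 * zr1 s + 2 * zc1 s

noncomputable def z2 (s : BlockArray a b t) : ℝ :=
  2 * zr2 s + 2 * zc2 s + 4 * zd1 s + 4 * zd2 s

/-- `η = 4p − 2a − 2b − 2(8ab − 7a − 7b + 4)/t + 4(2p − a − b)²/(pt)` where `p = ab`. -/
noncomputable def eta (a b t : ℕ) : ℝ :=
  4 * ((a : ℝ) * b) - 2 * a - 2 * b - 2 * (8 * (a : ℝ) * b - 7 * a - 7 * b + 4) / t +
    4 * (2 * (a : ℝ) * b - a - b) ^ 2 / (((a : ℝ) * b) * t)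

/-- A corner plot of the `a × b` block. -/
def IsCorner (q : Plot a b) : Prop :=
  (q.1.val = 0 ∨ q.1.val + 1 = a) ∧ (q.2.val = 0 ∨ q.2.val + 1 = b)

/-- Treatment `k` is significant in `s`: it occupies exactly two plots, which are
neighbors, at least one of them being a corner plot. -/
def Significant (s : BlockArray a b t) (k : Fin t) : Prop :=
  ∃ u v : Plot a b, u ≠ v ∧ {q : Plot a b | s q = k} = {u, v} ∧
    Neighbor u v ∧ (IsCorner u ∨ IsCorner v)

/-- Treatment `k` is strictly significant in `s`: both of its two plots are corners. -/
def StrictSignificant (s : BlockArray a b t) (k : Fin t) : Prop :=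
  ∃ u v : Plot a b, u ≠ v ∧ {q : Plot a b | s q = k} = {u, v} ∧
    Neighbor u v ∧ IsCorner u ∧ IsCorner v

/-- `Q_i`: block arrays with exactly `i` significant treatments in which every other
treatment appears at most once. -/
def Qset (a b t : ℕ) (i : ℕ) : Set (BlockArray a b t) :=
  {s | {k : Fin t | Significant s k}.ncard = i ∧
       ∀ k : Fin t, ¬ Significant s k → f0 s k ≤ 1}

/-- `Q_j*`: members of `Q_j` whose significant treatments are all strictly significant. -/
def QsetStar (a b t : ℕ) (j : ℕ) : Set (BlockArray a b t) :=
  {s | s ∈ Qset a b t j ∧ ∀ k : Fin t, Significant s k → StrictSignificant s k}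

/-- Treatment `k` is connected in `s`. -/
def ConnectedIn (s : BlockArray a b t) (k : Fin t) : Prop :=
  ∀ q r : Plot a b, s q = k → s r = k →
    Relation.ReflTransGen (fun u v => Neighbor u v ∧ s u = k ∧ s v = k) q r


/-- Degrees of the plots in a `2 × b` block. -/
noncomputable def dg {b : ℕ} (u : Plot 2 b) : ℝ :=
  3 - (if u.2.val = 0 then 1 else 0) - (if u.2.val + 1 = b then 1 else 0)

/-- Contribution of an ordered pair of plots with the same treatment. -/
noncomputable def ee {b : ℕ} (x : ℝ) (u v : Plot 2 b) : ℝ :=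
  (if u = v then 1 else 0) + 2 * x * Mmat 2 b u v + x ^ 2 * (∑ w, Mmat 2 b w u * Mmat 2 b w v)
    - (1 + 2 * x * dg v + x ^ 2 * (dg u * dg v)) / (2 * b)

lemma neighbor_symm {q r : Plot a b} (h : Neighbor q r) : Neighbor r q := by
  unfold Neighbor at *
  rcases h with ⟨h1, h2⟩ | ⟨h1, h2⟩
  · exact Or.inl ⟨h1.symm, h2.symm⟩
  · exact Or.inr ⟨h1.symm, h2.symm⟩

lemma M_symm (u v : Plot a b) : Mmat a b u v = Mmat a b v u := by
  have : Neighbor u v ↔ Neighbor v u := ⟨neighbor_symm, neighbor_symm⟩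
  simp [Mmat, this]

lemma M_row (hb : 3 ≤ b) (u : Plot 2 b) : ∑ v, Mmat 2 b u v = dg u := by
  obtain ⟨i, j⟩ := u
  have h1 : ∀ i' : Fin 2, ∀ j' : Fin b, Mmat 2 b (i, j) (i', j') =
      (if i' = i then ((if j'.val = j.val + 1 then 1 else 0) +
        (if j'.val + 1 = j.val then 1 else 0)) else 0)
      + (if i' = i then 0 else (if j' = j then 1 else 0)) := by
    intro i' j'
    simp only [Mmat, Neighbor, Matrix.of_apply, Fin.ext_iff]
    have := i.2
    have := i'.2
    split_ifs <;> first | omega | norm_num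
  have e1 : ∑ j' : Fin b, (if j'.val = j.val + 1 then (1 : ℝ) else 0)
      = 1 - (if j.val + 1 = b then 1 else 0) := by
    by_cases h : j.val + 1 = b
    · rw [Finset.sum_eq_zero]
      · simp [h]
      · intro k _
        have := k.2
        rw [if_neg]
        omega
    · have := j.2
      rw [Finset.sum_eq_single (⟨j.val + 1, by omega⟩ : Fin b)]
      · simp [h]
      · intro k _ hk
        rw [if_neg]
        intro h'
        exact hk (Fin.ext h')
      · simp
  have e2 : ∑ j' : Fin b, (if j'.val + 1 = j.val then (1 : ℝ) else 0)
      = 1 - (if j.val = 0 then 1 else 0) := by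
    by_cases h : j.val = 0
    · rw [Finset.sum_eq_zero]
      · simp [h]
      · intro k _
        rw [if_neg]
        omega
    · have := j.2
      rw [Finset.sum_eq_single (⟨j.val - 1, by omega⟩ : Fin b)]
      · rw [if_pos (by simp; omega), if_neg h]; norm_num
      · intro k _ hk
        rw [if_neg]
        intro h'
        apply hk
        apply Fin.ext
        simp
        omega
      · simp
  have e3 : ∑ j' : Fin b, (if j' = j then (1 : ℝ) else 0) = 1 := by simp
  rw [Fintype.sum_prod_type]
  simp only [h1, Finset.sum_add_distrib]
  have hi : i = 0 ∨ i = 1 := by omega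
  rcases hi with rfl | rfl <;>
    simp only [Fin.sum_univ_two, if_true, Finset.sum_add_distrib, e1, e2, e3, dg] <;>
    simp <;> ring

lemma dg_sum (hb : 3 ≤ b) : ∑ u : Plot 2 b, dg u = 6 * b - 4 := by
  have a1 : ∑ j : Fin b, (if j.val = 0 then (1 : ℝ) else 0) = 1 := by
    rw [Finset.sum_eq_single (⟨0, by omega⟩ : Fin b)]
    · simp
    · intro k _ hk
      rw [if_neg]
      exact fun h => hk (Fin.ext h)
    · simp
  have a2 : ∑ j : Fin b, (if j.val + 1 = b then (1 : ℝ) else 0) = 1 := by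
    rw [Finset.sum_eq_single (⟨b - 1, by omega⟩ : Fin b)]
    · rw [if_pos]; simp; omega
    · intro k _ hk
      rw [if_neg]
      exact fun h => hk (Fin.ext (by simp; omega))
    · simp
  rw [Fintype.sum_prod_type]
  simp only [dg, Finset.sum_sub_distrib, Fin.sum_univ_two, a1, a2]
  simp; ring

lemma dg_sq_sum (hb : 3 ≤ b) : ∑ u : Plot 2 b, dg u * dg u = 18 * b - 20 := by
  have h : ∀ u : Plot 2 b, dg u * dg u = 5 * dg u - 6 := by
    intro u
    unfold dg
    split_ifs
    · omega
    all_goals norm_num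
  simp only [h, Finset.sum_sub_distrib, ← Finset.mul_sum, dg_sum hb]
  simp; ring

lemma trace_formula (X Y : Matrix (Plot 2 b) (Fin t) ℝ) :
    Matrix.trace (Bmat (Fin t) * (Xᵀ * Bmat (Plot 2 b) * Y)) =
      (∑ u, ∑ k, X u k * Y u k - (2 * (b : ℝ))⁻¹ * ∑ u, ∑ v, ∑ k, X u k * Y v k)
      - (t : ℝ)⁻¹ * (∑ u, (∑ k, X u k) * (∑ k, Y u k)
          - (2 * (b : ℝ))⁻¹ * ((∑ u, ∑ k, X u k) * (∑ u, ∑ k, Y u k))) := by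
  have hC : ∀ k l, (Xᵀ * Bmat (Plot 2 b) * Y) k l =
      ∑ u, X u k * Y u l - (2 * (b : ℝ))⁻¹ * ((∑ u, X u k) * ∑ v, Y v l) := by
    intro k l
    rw [Bmat, Matrix.mul_sub, Matrix.sub_mul, Matrix.mul_one, Matrix.mul_smul, Matrix.smul_mul,
      Matrix.sub_apply, Matrix.smul_apply]
    simp only [Matrix.mul_apply, Matrix.transpose_apply, Jmat, Matrix.of_apply, mul_one,
      ← Finset.mul_sum]
    simp
  generalize (Xᵀ * Bmat (Plot 2 b) * Y) = C at hC
  have hT : Matrix.trace (Bmat (Fin t) * C) = ∑ k, C k k - (t : ℝ)⁻¹ * ∑ k, ∑ l, C l k := by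
    rw [Bmat, Matrix.sub_mul, Matrix.one_mul, Matrix.smul_mul, Matrix.trace_sub, Matrix.trace_smul]
    simp [Matrix.trace, Matrix.mul_apply, Jmat]
  rw [hT]
  simp only [hC, Finset.sum_sub_distrib, ← Finset.mul_sum]
  congr 1
  · congr 1
    · exact Finset.sum_comm
    · congr 1
      simp only [Finset.sum_mul_sum]
      rw [Finset.sum_comm]
      refine Finset.sum_congr rfl fun u _ => ?_
      rw [Finset.sum_comm]
  · congr 2
    · simp only [Finset.sum_mul_sum]
      rw [Finset.sum_congr rfl fun k _ => Finset.sum_comm, Finset.sum_comm]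
      refine Finset.sum_congr rfl fun u _ => ?_
      rw [Finset.sum_comm]
    · congr 1
      rw [Finset.sum_comm (f := fun u k => X u k), Finset.sum_comm (f := fun u k => Y u k),
        Finset.sum_mul_sum, Finset.sum_comm]

/-- Indicator of equal treatments. -/
noncomputable def gg (s : BlockArray 2 b t) (u v : Plot 2 b) : ℝ := if s u = s v then 1 else 0

lemma TT (s : BlockArray 2 b t) (u v : Plot 2 b) : ∑ k, Tmat s u k * Tmat s v k = gg s u v := by
  simp [Tmat, gg, eq_comm]

lemma T_row (s : BlockArray 2 b t) (u : Plot 2 b) : ∑ k, Tmat s u k = 1 := by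
  simp [Tmat]

lemma TF (s : BlockArray 2 b t) (u v : Plot 2 b) :
    ∑ k, Tmat s u k * Fmat s v k = ∑ w, Mmat 2 b v w * gg s u w := by
  simp only [Fmat, Matrix.mul_apply, Finset.mul_sum]
  rw [Finset.sum_comm]
  refine Finset.sum_congr rfl fun w _ => ?_
  rw [← TT, Finset.mul_sum]
  exact Finset.sum_congr rfl fun k _ => by ring

lemma FF (s : BlockArray 2 b t) (u v : Plot 2 b) :
    ∑ k, Fmat s u k * Fmat s v k = ∑ w, ∑ w', Mmat 2 b u w * Mmat 2 b v w' * gg s w w' := by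
  have : ∀ k, Fmat s u k * Fmat s v k = ∑ w, Mmat 2 b u w * (Tmat s w k * Fmat s v k) := by
    intro k
    rw [Fmat, Matrix.mul_apply, Finset.sum_mul]
    exact Finset.sum_congr rfl fun k _ => by ring
  simp only [this]
  rw [Finset.sum_comm]
  refine Finset.sum_congr rfl fun w _ => ?_
  rw [← Finset.mul_sum, TF, Finset.mul_sum]
  exact Finset.sum_congr rfl fun k _ => by ring

lemma F_row (hb : 3 ≤ b) (s : BlockArray 2 b t) (u : Plot 2 b) : ∑ k, Fmat s u k = dg u := by
  simp only [Fmat, Matrix.mul_apply]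
  rw [Finset.sum_comm]
  simp only [← Finset.mul_sum, T_row, mul_one, M_row hb]

lemma sum_four {P : Type*} [Fintype P] (f : P → P → P → P → ℝ) :
    ∑ u, ∑ v, ∑ w, ∑ w', f u v w w' = ∑ w, ∑ w', ∑ u, ∑ v, f u v w w' := by
  calc ∑ u, ∑ v, ∑ w, ∑ w', f u v w w' = ∑ u, ∑ w, ∑ v, ∑ w', f u v w w' :=
        Finset.sum_congr rfl fun u _ => Finset.sum_comm
    _ = ∑ w, ∑ u, ∑ v, ∑ w', f u v w w' := Finset.sum_comm
    _ = ∑ w, ∑ u, ∑ w', ∑ v, f u v w w' :=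
        Finset.sum_congr rfl fun u _ => Finset.sum_congr rfl fun u _ => Finset.sum_comm
    _ = ∑ w, ∑ w', ∑ u, ∑ v, f u v w w' := Finset.sum_congr rfl fun u _ => Finset.sum_comm

lemma q_formula (hb : 3 ≤ b) (s : BlockArray 2 b t) (x : ℝ) :
    qpoly (Bmat (Plot 2 b)) s x = ∑ u, ∑ v, gg s u v * ee x u v
      - x ^ 2 * ((t : ℝ)⁻¹ * ((18 * b - 20) - (2 * (b : ℝ))⁻¹ * ((6 * b - 4) * (6 * b - 4)))) := by
  have hb0 : (b : ℝ) ≠ 0 := by positivity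
  have hcard : ∑ u : Plot 2 b, (1 : ℝ) = 2 * b := by simp
  have c0 : cs00 (Bmat (Plot 2 b)) s = ∑ u, ∑ v, gg s u v * (if u = v then 1 else 0)
      - (2 * (b : ℝ))⁻¹ * ∑ u, ∑ v, gg s u v := by
    rw [cs00, Cs00, trace_formula]
    simp only [TT, T_row, mul_one, hcard]
    simp
    right; field_simp; simp
  have c1 : cs01 (Bmat (Plot 2 b)) s = ∑ u, ∑ v, gg s u v * Mmat 2 b u v
      - (2 * (b : ℝ))⁻¹ * ∑ u, ∑ v, gg s u v * dg v := by
    rw [cs01, Cs01, trace_formula]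
    simp only [TF, T_row, F_row hb, one_mul, hcard]
    have : ∀ u, ∑ v, ∑ w, Mmat 2 b v w * gg s u w = ∑ v, gg s u v * dg v := by
      intro u
      rw [Finset.sum_comm]
      refine Finset.sum_congr rfl fun v _ => ?_
      rw [← M_row hb, Finset.mul_sum]
      exact Finset.sum_congr rfl fun w _ => by rw [M_symm w v]; ring
    simp only [this]
    rw [inv_mul_cancel_left₀ (by positivity)]
    simp [mul_comm]
  have c2 : cs11 (Bmat (Plot 2 b)) s =
      ∑ u, ∑ v, gg s u v * (∑ w, Mmat 2 b w u * Mmat 2 b w v)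
      - (2 * (b : ℝ))⁻¹ * ∑ u, ∑ v, gg s u v * (dg u * dg v)
      - (t : ℝ)⁻¹ * ((18 * b - 20) - (2 * (b : ℝ))⁻¹ * ((6 * b - 4) * (6 * b - 4))) := by
    rw [cs11, Cs11, trace_formula]
    simp only [FF, F_row hb, dg_sum hb, dg_sq_sum hb]
    congr 2
    · rw [Finset.sum_comm]
      refine Finset.sum_congr rfl fun u _ => ?_
      rw [Finset.sum_comm]
      refine Finset.sum_congr rfl fun v _ => ?_
      rw [Finset.mul_sum]
      exact Finset.sum_congr rfl fun w _ => by ring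
    · congr 1
      have : ∀ u v, gg s u v * (dg u * dg v)
          = ∑ w, ∑ w', Mmat 2 b w u * Mmat 2 b w' v * gg s u v := by
        intro u v
        rw [← M_row hb u, ← M_row hb v, Finset.sum_mul_sum, Finset.mul_sum]
        refine Finset.sum_congr rfl fun w _ => ?_
        rw [Finset.mul_sum]
        refine Finset.sum_congr rfl fun w' _ => ?_
        rw [M_symm w u, M_symm w' v]; ring
      simp only [this]
      exact sum_four (fun u v w w' => Mmat 2 b u w * Mmat 2 b v w' * gg s w w')
  rw [qpoly, c0, c1, c2]
  have : ∀ u v : Plot 2 b, gg s u v * ee x u v =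
      (gg s u v * (if u = v then 1 else 0) - (2 * (b : ℝ))⁻¹ * gg s u v)
      + 2 * x * (gg s u v * Mmat 2 b u v - (2 * (b : ℝ))⁻¹ * (gg s u v * dg v))
      + x ^ 2 * (gg s u v * (∑ w, Mmat 2 b w u * Mmat 2 b w v)
        - (2 * (b : ℝ))⁻¹ * (gg s u v * (dg u * dg v))) := by
    intro u v
    rw [ee]; ring
  simp only [this, Finset.sum_add_distrib, Finset.sum_sub_distrib, ← Finset.mul_sum]
  ring

/-- Value of the quadratic on binary arrays. -/
noncomputable def ybin (b t : ℕ) (x : ℝ) : ℝ :=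
  2 * (b : ℝ) - 1 + (4 / (b : ℝ) - 6) * x + (eta 2 b t - 9 + 10 / (b : ℝ)) * x ^ 2

lemma diag_sum (hb : 3 ≤ b) (x : ℝ) : ∑ u : Plot 2 b, ee x u u =
    2 * b + x ^ 2 * (6 * b - 4)
      - (2 * b + 2 * x * (6 * b - 4) + x ^ 2 * (18 * b - 20)) / (2 * b) := by
  have hM : ∀ w u : Plot 2 b, Mmat 2 b w u * Mmat 2 b w u = Mmat 2 b u w := by
    intro w u
    rw [M_symm u w]
    simp only [Mmat, Matrix.of_apply]
    split_ifs <;> norm_num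
  have hMu : ∀ u : Plot 2 b, Mmat 2 b u u = 0 := by
    intro u
    simp [Mmat, Neighbor]
  have hcard : ∑ u : Plot 2 b, (1 : ℝ) = 2 * b := by simp
  simp only [ee, hM, hMu, M_row hb, if_true, mul_zero, add_zero]
  rw [Finset.sum_sub_distrib, ← Finset.sum_div]
  simp only [Finset.sum_add_distrib, ← Finset.mul_sum, dg_sum hb, dg_sq_sum hb, hcard]

lemma q_eq (hb : 3 ≤ b) (ht : 2 * b ≤ t) (s : BlockArray 2 b t) (x : ℝ) :
    qpoly (Bmat (Plot 2 b)) s x = ybin b t x +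
      ∑ z : Plot 2 b × Plot 2 b, (if z.1 ≠ z.2 ∧ s z.1 = s z.2 then ee x z.1 z.2 else 0) := by
  have hb0 : (b : ℝ) ≠ 0 := by positivity
  have ht0 : (t : ℝ) ≠ 0 := by
    have : t ≠ 0 := by omega
    exact_mod_cast this
  rw [q_formula hb, Fintype.sum_prod_type (f := fun z : Plot 2 b × Plot 2 b =>
    (if z.1 ≠ z.2 ∧ s z.1 = s z.2 then ee x z.1 z.2 else 0))]
  have h : ∀ u v : Plot 2 b, gg s u v * ee x u v = (if u = v then ee x u u else 0) +
      (if u ≠ v ∧ s u = s v then ee x u v else 0) := by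
    intro u v
    unfold gg
    by_cases huv : u = v
    · subst huv; simp
    · simp [huv]
  simp only [h, Finset.sum_add_distrib]
  have h2 : ∑ u : Plot 2 b, ∑ v, (if u = v then ee x u u else 0) = ∑ u : Plot 2 b, ee x u u := by
    simp
  rw [h2, diag_sum hb, ybin, eta]
  push_cast
  field_simp
  ring

lemma dg_ge (hb : 3 ≤ b) (u : Plot 2 b) : 2 ≤ dg u := by
  unfold dg
  split_ifs
  · omega
  all_goals norm_num

lemma dg_le (u : Plot 2 b) : dg u ≤ 3 := by
  unfold dg
  split_ifs <;> norm_num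

lemma dg_corner (hb : 3 ≤ b) (u : Plot 2 b) (h : IsCorner u) : dg u = 2 := by
  obtain ⟨_, h⟩ := h
  unfold dg
  rcases h with h | h
  · rw [if_pos h, if_neg (by omega)]; norm_num
  · rw [if_pos h, if_neg (by omega)]; norm_num

lemma dg_not_corner (u : Plot 2 b) (h : ¬ IsCorner u) : dg u = 3 := by
  have : ¬ (u.2.val = 0 ∨ u.2.val + 1 = b) := by
    intro h'
    apply h
    refine ⟨?_, h'⟩
    have := u.1.2
    omega
  push Not at this
  unfold dg
  rw [if_neg this.1, if_neg this.2]; norm_num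

lemma N_zero {u v : Plot 2 b} (h : Neighbor u v) : ∑ w, Mmat 2 b w u * Mmat 2 b w v = 0 := by
  apply Finset.sum_eq_zero
  intro w _
  simp only [Mmat, Matrix.of_apply]
  by_cases h1 : Neighbor w u
  · by_cases h2 : Neighbor w v
    · exfalso
      unfold Neighbor at h h1 h2
      simp only [Fin.ext_iff] at h h1 h2
      omega
    · simp [h2]
  · simp [h1]

lemma N_le (hb : 3 ≤ b) (u v : Plot 2 b) : ∑ w, Mmat 2 b w u * Mmat 2 b w v ≤ 3 := by
  refine le_trans ?_ (dg_le u)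
  rw [← M_row hb u]
  apply Finset.sum_le_sum
  intro w _
  rw [M_symm u w]
  simp only [Mmat, Matrix.of_apply]
  split_ifs <;> norm_num

/-- The pairs with zero contribution. -/
def Good (u v : Plot 2 b) : Prop := Neighbor u v ∧ IsCorner u ∧ IsCorner v

lemma ee_good (hb : 3 ≤ b) (x : ℝ) {u v : Plot 2 b} (huv : u ≠ v) (h : Good u v) :
    ee x u v = 2 * x - (1 + 2 * x) ^ 2 / (2 * b) := by
  obtain ⟨h1, h2, h3⟩ := h
  have hM : Mmat 2 b u v = 1 := by simp [Mmat, h1]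
  rw [ee, N_zero h1, dg_corner hb u h2, dg_corner hb v h3, hM, if_neg huv]
  ring

lemma ee_bad (hb : 3 ≤ b) (x : ℝ) (hx0 : 0 < x) (hx1 : x < 1 / 4)
    (hx : 2 * x = (1 + 2 * x) ^ 2 / (2 * b)) {u v : Plot 2 b} (huv : u ≠ v) (h : ¬ Good u v) :
    ee x u v < 0 := by
  have hb0 : (0 : ℝ) < 2 * b := by positivity
  have hu := dg_ge hb u
  have hv := dg_ge hb v
  rw [ee, if_neg huv]
  have key : (1 + 2 * x) ^ 2 ≤ 1 + 2 * x * dg v + x ^ 2 * (dg u * dg v) := by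
    have : 4 ≤ dg u * dg v := by nlinarith
    nlinarith [sq_nonneg x]
  by_cases hN : Neighbor u v
  · rw [N_zero hN]
    have hM : Mmat 2 b u v = 1 := by simp [Mmat, hN]
    rw [hM]
    have key2 : (1 + 2 * x) ^ 2 < 1 + 2 * x * dg v + x ^ 2 * (dg u * dg v) := by
      have h6 : 6 ≤ dg u * dg v := by
        by_cases c : IsCorner u
        · have c' : ¬ IsCorner v := fun c' => h ⟨hN, c, c'⟩
          rw [dg_not_corner v c']; linarith
        · rw [dg_not_corner u c]; linarith
      nlinarith [sq_pos_of_pos hx0]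
    have := (div_lt_div_iff_of_pos_right hb0).2 key2
    linarith
  · have hM : Mmat 2 b u v = 0 := by simp [Mmat, hN]
    rw [hM]
    have := (div_le_div_iff_of_pos_right hb0).2 key
    have := N_le hb u v
    have : x ^ 2 * ∑ w, Mmat 2 b w u * Mmat 2 b w v ≤ x ^ 2 * 3 :=
      mul_le_mul_of_nonneg_left this (sq_nonneg x)
    nlinarith

lemma mem_iff (hb : 3 ≤ b) (s : BlockArray 2 b t) :
    s ∈ Qset 2 b t 0 ∪ QsetStar 2 b t 1 ∪ QsetStar 2 b t 2 ↔
      ∀ u v : Plot 2 b, u ≠ v → s u = s v → Good u v := by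
  constructor
  · intro h u v huv hs
    have hf : ¬ f0 s (s u) ≤ 1 := by
      unfold f0
      rw [Set.ncard_le_one]
      intro h'
      exact huv (h' u rfl v hs.symm)
    have hfin : ∀ i, s ∈ Qset 2 b t i → Significant s (s u) := by
      intro i hi
      by_contra hc
      exact hf (hi.2 _ hc)
    have hstrict : StrictSignificant s (s u) := by
      rcases h with (h | h) | h
      · exfalso
        have h1 := h.1
        rw [Set.ncard_eq_zero] at h1
        have : s u ∈ {k : Fin t | Significant s k} := hfin _ h
        rw [h1] at this
        exact this
      · exact h.2 _ (hfin _ h.1)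
      · exact h.2 _ (hfin _ h.1)
    obtain ⟨u', v', _, h2, h3, h4, h5⟩ := hstrict
    have hu : u ∈ ({u', v'} : Set (Plot 2 b)) := by rw [← h2]; rfl
    have hv : v ∈ ({u', v'} : Set (Plot 2 b)) := by rw [← h2]; exact hs.symm
    rcases hu with rfl | rfl <;> rcases hv with rfl | rfl
    · exact absurd rfl huv
    · exact ⟨h3, h4, h5⟩
    · exact ⟨neighbor_symm h3, h5, h4⟩
    · exact absurd rfl huv
  · intro h
    have hcol : ∀ u v : Plot 2 b, Good u v → u.2 = v.2 ∧ (u.2.val = 0 ∨ u.2.val + 1 = b) := by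
      intro u v hg
      obtain ⟨h1, h2, h3⟩ := hg
      unfold Neighbor at h1
      unfold IsCorner at h2 h3
      simp only [Fin.ext_iff] at *
      omega
    have hns : ∀ k : Fin t, ¬ StrictSignificant s k → f0 s k ≤ 1 := by
      intro k hk
      by_contra hc
      unfold f0 at hc
      rw [Set.ncard_le_one] at hc
      push Not at hc
      obtain ⟨u, hu, v, hv, huv⟩ := hc
      have hu' : s u = k := hu
      have hv' : s v = k := hv
      have hg := h u v huv (hu'.trans hv'.symm)
      apply hk
      refine ⟨u, v, huv, ?_, hg⟩
      ext w
      constructor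
      · intro hw
        have hw' : s w = k := hw
        by_contra hwn
        have hwu : u ≠ w := fun e => hwn (Or.inl e.symm)
        have hwv : v ≠ w := fun e => hwn (Or.inr e.symm)
        have g1 := (hcol _ _ (h u w hwu (hu'.trans hw'.symm))).1
        have g2 := (hcol _ _ (h v w hwv (hv'.trans hw'.symm))).1
        have := u.1.2
        have := v.1.2
        have := w.1.2
        simp only [ne_eq, Prod.ext_iff, Fin.ext_iff] at *
        omega
      · rintro (rfl | rfl)
        · exact hu
        · exact hv
    have hss : ∀ k, Significant s k → StrictSignificant s k := by
      intro k hk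
      by_contra hc
      have h1 := hns k hc
      obtain ⟨u, v, huv, he, _⟩ := hk
      unfold f0 at h1
      rw [he, Set.ncard_pair huv] at h1
      omega
    have hq : ∀ i, {k : Fin t | Significant s k}.ncard = i → s ∈ Qset 2 b t i := by
      intro i hi
      refine ⟨hi, fun k hk => hns k fun hc => hk ?_⟩
      obtain ⟨u, v, h1, h2, h3, h4, _⟩ := hc
      exact ⟨u, v, h1, h2, h3, Or.inl h4⟩
    have hle : {k : Fin t | Significant s k}.ncard ≤ 2 := by
      have hsub : {k : Fin t | Significant s k} ⊆
          {s (0, ⟨0, by omega⟩), s (0, ⟨b - 1, by omega⟩)} := by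
        intro k hk
        obtain ⟨u, v, huv, he, hg⟩ := hss k hk
        have hc := hcol u v hg
        have hu : s u = k := by
          have : u ∈ {q | s q = k} := by rw [he]; simp
          exact this
        have hv : s v = k := by
          have : v ∈ {q | s q = k} := by rw [he]; simp
          exact this
        have : u.1 = 0 ∨ v.1 = 0 := by
          by_contra hn
          push Not at hn
          apply huv
          have e1 : u.1 = v.1 := by omega
          exact Prod.ext e1 hc.1
        have hw : ∃ w : Plot 2 b, s w = k ∧ w.1 = 0 ∧ (w.2.val = 0 ∨ w.2.val + 1 = b) := by
          rcases this with h0 | h0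
          · exact ⟨u, hu, h0, hc.2⟩
          · exact ⟨v, hv, h0, hc.1 ▸ hc.2⟩
        obtain ⟨⟨w1, w2⟩, hw1, hw2, hw3⟩ := hw
        simp only at hw2 hw3
        subst hw2
        rcases hw3 with h3 | h3
        · left
          rw [← hw1]
          congr
          exact Fin.ext h3
        · right
          rw [Set.mem_singleton_iff, ← hw1]
          congr
          exact Fin.ext (by simp; omega)
      refine le_trans (Set.ncard_le_ncard hsub) ?_
      refine le_trans (Set.ncard_insert_le _ _) ?_
      rw [Set.ncard_singleton]
    have hn : {k : Fin t | Significant s k}.ncard = 0 ∨ {k : Fin t | Significant s k}.ncard = 1 ∨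
        {k : Fin t | Significant s k}.ncard = 2 := by omega
    rcases hn with hn | hn | hn
    · exact Or.inl (Or.inl (hq 0 hn))
    · exact Or.inl (Or.inr ⟨hq 1 hn, hss⟩)
    · exact Or.inr ⟨hq 2 hn, hss⟩

/-- Identify the two plots of each of the two end columns. -/
def collapse (u : Plot 2 b) : Plot 2 b := if u.2.val = 0 ∨ u.2.val + 1 = b then (0, u.2) else u

lemma q_two (hb : 3 ≤ b) (ht : 2 * b ≤ t) (f : Plot 2 b ↪ Fin t) (x : ℝ) :
    qpoly (Bmat (Plot 2 b)) (fun u => f (collapse u)) x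
      = ybin b t x + 4 * (2 * x - (1 + 2 * x) ^ 2 / (2 * b)) := by
  rw [q_eq hb ht]
  congr 1
  let o : Fin b := ⟨0, by omega⟩
  let l : Fin b := ⟨b - 1, by omega⟩
  have hol : o ≠ l := by
    intro h
    have := congrArg Fin.val h
    simp only [o, l] at this
    omega
  have hset : (Finset.univ.filter fun z : Plot 2 b × Plot 2 b =>
      z.1 ≠ z.2 ∧ f (collapse z.1) = f (collapse z.2)) =
      {((0, o), (1, o)), ((1, o), (0, o)), ((0, l), (1, l)), ((1, l), (0, l))} := by
    ext ⟨⟨i, j⟩, ⟨i', j'⟩⟩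
    simp only [Finset.mem_filter, Finset.mem_univ, true_and, f.injective.eq_iff, collapse,
      Finset.mem_insert, Finset.mem_singleton, Prod.ext_iff, Fin.ext_iff, o, l, ne_eq]
    have := i.2
    have := i'.2
    have := j.2
    have := j'.2
    split_ifs <;> simp <;> omega
  have hgood : ∀ z ∈ Finset.univ.filter (fun z : Plot 2 b × Plot 2 b =>
      z.1 ≠ z.2 ∧ f (collapse z.1) = f (collapse z.2)),
      ee x z.1 z.2 = 2 * x - (1 + 2 * x) ^ 2 / (2 * b) := by
    intro z hz
    have hne := (Finset.mem_filter.1 hz).2.1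
    apply ee_good hb x hne
    rw [hset] at hz
    simp only [Finset.mem_insert, Finset.mem_singleton] at hz
    rcases hz with rfl | rfl | rfl | rfl <;>
      simp [Good, Neighbor, IsCorner, o, l] <;> omega
  rw [← Finset.sum_filter, Finset.sum_congr rfl hgood, Finset.sum_const, hset]
  have hc : ({((0, o), (1, o)), ((1, o), (0, o)), ((0, l), (1, l)), ((1, l), (0, l))} :
      Finset (Plot 2 b × Plot 2 b)).card = 4 := by
    rw [Finset.card_insert_of_notMem, Finset.card_insert_of_notMem, Finset.card_insert_of_notMem,
      Finset.card_singleton] <;> simp [hol]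
  rw [hc]
  simp

lemma q_zero (hb : 3 ≤ b) (ht : 2 * b ≤ t) (f : Plot 2 b ↪ Fin t) (x : ℝ) :
    qpoly (Bmat (Plot 2 b)) (fun u => f u) x = ybin b t x := by
  rw [q_eq hb ht, Finset.sum_eq_zero, add_zero]
  intro z _
  rw [if_neg]
  rintro ⟨h1, h2⟩
  exact h1 (f.injective h2)

lemma le_rfun (s : BlockArray 2 b t) (x : ℝ) :
    qpoly (Bmat (Plot 2 b)) s x ≤ rfun t (Bmat (Plot 2 b)) x :=
  le_csSup (Set.finite_range _).bddAbove ⟨s, rfl⟩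

/-- Theorem `t=p`, case `a = 2`, `b ≥ 3`: the quadratics `q_s` are
maximized at `x* = (b−1−√((b−1)²−1))/2` exactly on `Q₀ ∪ Q₁* ∪ Q₂*`. -/
theorem optimality_t_ge_p_a_eq_two
    (b t : ℕ) (hb : 3 ≤ b) (ht : 2 * b ≤ t)
    (xstar ystar : ℝ)
    (hx : xstar = ((b : ℝ) - 1 - Real.sqrt (((b : ℝ) - 1) ^ 2 - 1)) / 2)
    (hy : ystar = 2 * (b : ℝ) - 1 + (4 / (b : ℝ) - 6) * xstar +
        (eta 2 b t - 9 + 10 / (b : ℝ)) * xstar ^ 2) :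
    (∀ s : BlockArray 2 b t,
       qpoly (Bmat (Plot 2 b)) s xstar ≤ ystar ∧
       (qpoly (Bmat (Plot 2 b)) s xstar = ystar ↔
         s ∈ Qset 2 b t 0 ∪ QsetStar 2 b t 1 ∪ QsetStar 2 b t 2)) ∧
    (∀ x : ℝ, x ≠ xstar → ystar < rfun t (Bmat (Plot 2 b)) x) := by
  have hbR : (3 : ℝ) ≤ b := by exact_mod_cast hb
  have htR : 2 * (b : ℝ) ≤ t := by exact_mod_cast ht
  have hb0 : (0 : ℝ) < b := by linarith
  have ht0 : (0 : ℝ) < t := by linarith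
  have hy' : ystar = ybin b t xstar := hy
  have hrad : (0 : ℝ) ≤ ((b : ℝ) - 1) ^ 2 - 1 := by nlinarith
  have hsq := Real.sq_sqrt hrad
  have hs0 := Real.sqrt_nonneg (((b : ℝ) - 1) ^ 2 - 1)
  set r := Real.sqrt (((b : ℝ) - 1) ^ 2 - 1) with hr
  have hx0 : 0 < xstar := by
    have : r < (b : ℝ) - 1 := by nlinarith
    rw [hx]; linarith
  have hx1 : xstar < 1 / 4 := by
    have : (b : ℝ) - 1 - 1 / 2 < r := by nlinarith
    rw [hx]; linarith
  have hroot : 4 * xstar ^ 2 - 4 * ((b : ℝ) - 1) * xstar + 1 = 0 := by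
    rw [hx]; linear_combination hsq
  have hxe : 2 * xstar = (1 + 2 * xstar) ^ 2 / (2 * b) := by
    rw [eq_div_iff (by positivity)]
    linarith
  refine ⟨?_, ?_⟩
  · intro s
    rw [mem_iff hb, q_eq hb ht, hy']
    have hterm : ∀ z : Plot 2 b × Plot 2 b,
        (if z.1 ≠ z.2 ∧ s z.1 = s z.2 then ee xstar z.1 z.2 else 0) ≤ 0 := by
      intro z
      split_ifs with h
      · by_cases hg : Good z.1 z.2
        · rw [ee_good hb xstar h.1 hg]; linarith
        · exact (ee_bad hb xstar hx0 hx1 hxe h.1 hg).le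
      · exact le_rfl
    have hsum := Finset.sum_nonpos (s := Finset.univ) fun z _ => hterm z
    refine ⟨by linarith, ?_⟩
    rw [add_eq_left, Finset.sum_eq_zero_iff_of_nonpos fun z _ => hterm z]
    constructor
    · intro h u v huv hs
      by_contra hg
      have h1 := h (u, v) (Finset.mem_univ _)
      rw [if_pos ⟨huv, hs⟩] at h1
      have := ee_bad hb xstar hx0 hx1 hxe huv hg
      simp only at h1
      linarith
    · intro h z _
      split_ifs with hz
      · rw [ee_good hb xstar hz.1 (h _ _ hz.1 hz.2)]; linarith
      · rfl
  · intro x hxx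
    obtain ⟨f⟩ : Nonempty (Plot 2 b ↪ Fin t) :=
      Function.Embedding.nonempty_of_card_le (by simpa using ht)
    set E : ℝ := eta 2 b t - 9 + 10 / (b : ℝ) with hE
    set i : ℝ := 1 / (b : ℝ) with hi
    have hi0 : 0 < i := by positivity
    have hbi : b * i = 1 := by rw [hi]; field_simp
    have hi3 : i ≤ 1 / 3 := by rw [hi]; exact one_div_le_one_div_of_le (by norm_num) hbR
    have hEe : E = 6 * b - 13 + 10 * i - (4 - 8 * i) / t := by
      rw [hE, hi, eta]
      push_cast
      field_simp
      ring
    have hfrac0 : 0 ≤ (4 - 8 * i) / t := div_nonneg (by linarith) ht0.le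
    have hfrac1 : (4 - 8 * i) / t ≤ 1 := by
      rw [div_le_one ht0]; linarith
    have hE1 : E ≤ 6 * (b - 1) := by linarith
    have hE2 : 8 * i < E := by linarith
    have hyb : ∀ z, ybin b t z = 2 * (b : ℝ) - 1 + (4 * i - 6) * z + E * z ^ 2 := by
      intro z
      rw [ybin, hi]; ring
    rcases lt_or_gt_of_ne hxx with hlt | hgt
    · refine lt_of_lt_of_le ?_ (le_rfun (fun u => f u) x)
      rw [q_zero hb ht, hy', hyb, hyb]
      have hd : (4 * i - 6) + 2 * E * xstar < 0 := by
        have : E * xstar ≤ 6 * (b - 1) * xstar := mul_le_mul_of_nonneg_right hE1 hx0.le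
        have hxs : xstar ^ 2 < (1 / 4) ^ 2 := pow_lt_pow_left₀ hx1 hx0.le (by norm_num)
        linarith
      have hE0 : 0 ≤ E := by linarith
      linarith [mul_nonneg hE0 (sq_nonneg (x - xstar)), mul_pos_of_neg_of_neg hd (sub_neg.2 hlt)]
    · refine lt_of_lt_of_le ?_ (le_rfun (fun u => f (collapse u)) x)
      rw [q_two hb ht, hy']
      have hroot' : 4 * (2 * xstar - (1 + 2 * xstar) ^ 2 / (2 * b)) = 0 := by linarith
      have hform : ∀ z, ybin b t z + 4 * (2 * z - (1 + 2 * z) ^ 2 / (2 * b)) =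
          2 * (b : ℝ) - 1 - 2 * i + (2 - 4 * i) * z + (E - 8 * i) * z ^ 2 := by
        intro z
        rw [hyb, hi]
        field_simp
        ring
      have e1 := hform x
      have e2 := hform xstar
      rw [hroot'] at e2
      have hlt2 : xstar ^ 2 < x ^ 2 := pow_lt_pow_left₀ hgt hx0.le (by norm_num)
      have g1 : 0 < (2 - 4 * i) * (x - xstar) := mul_pos (by linarith) (by linarith)
      have g2 : 0 < (E - 8 * i) * (x ^ 2 - xstar ^ 2) := mul_pos (by linarith) (by linarith)
      linarith

end TwoDim
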